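/- For every partition λ = (λ₁ ≥ … ≥ λ_l ≥ 0), the dual vertex operator components applied to the vacuum give, up to sign, the Schur function of the conjugate partition: S*_{λ₁} S*_{λ₂} ⋯ S*_{λ_l}(1) = (−1)^{|λ|} s_{λ'} = (−1)^{|λ|} det(h_{λ'_i−i+j})_{1≤i,j≤λ₁}, where |λ| = λ₁+…+λ_l and λ' is the conjugate partition. Equivalently, S*_{λ₁} ⋯ S*_{λ_l}(1) = (−1)^{|λ|} det(e_{λ_i−i+j})_{1≤i,j≤l}. -/

import Mathlib

/-!
By Taylor's formula `h_j(∂) P` is the coefficient of `z^j` in `P(p₁ + z, p₂ + z², …)`. This shift is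
a ring homomorphism, and it multiplies `E(-t) = ∑ (-1)^k e_k t^k` by `1 - z t`. It therefore turns a
determinant with entries `(-1)^k e_k` into one with columns `v_{j+1} - z v_j`, whose coefficients in
`z` are up to sign the maximal minors of the array `(v_0, …, v_l)`. Hence `S*_n` is Laplace
expansion along a new first row with entries `(-1)^(n+j) e_{n+j}`, and induction on the number of
rows gives the formula with `e`.

From `H(t) E(-t) = 1` the Toeplitz matrices of `H(t)` and `E(-t)` are mutually inverse. The boundary
path of `λ` in a rectangle selects complementary minors of them, which are the two determinants of
the theorem; by Jacobi's identity they agree up to the sign of a shuffle whose inversions are the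
boxes of `λ`.
-/

open MvPolynomial

noncomputable section

/-- The ring of symmetric functions `Λ = ℚ[p₁,p₂,…]`, with the variable `X n`
(for `n : ℕ+`) playing the role of the power sum `p_n`. -/
abbrev Lam : Type := MvPolynomial ℕ+ ℚ

/-- The power sum `p_n`. -/
def pp (n : ℕ+) : Lam := X n

/-- The family `g` with generating function `∑_k g_k t^k = exp (∑_{n≥1} c n · p_n tⁿ / n)`,
characterized by `g 0 = 1` together with the recursion obtained by differentiating the
generating function:  `(k+1) · g (k+1) = ∑_{i=0}^{k} c (i+1) · p_{i+1} · g (k-i)`. -/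
def genFam (c : ℕ → ℚ) : ℕ → Lam
  | 0 => 1
  | (k+1) => (((k : ℚ) + 1)⁻¹) •
      ∑ i ∈ Finset.range (k+1), c (i+1) • (pp ⟨i+1, Nat.succ_pos i⟩ * genFam c (k - i))
  decreasing_by exact Nat.lt_succ_of_le (Nat.sub_le k i)

/-- The complete homogeneous symmetric function `h_k`,
with generating function `exp (∑ p_n tⁿ/n)`. -/
def hh : ℕ → Lam := genFam fun _ => 1

/-- The elementary symmetric function `e_k`,
with generating function `exp (∑ (−1)^{n−1} p_n tⁿ/n)`. -/
def ee : ℕ → Lam := genFam fun n => (-1)^(n+1)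

/-- `h` indexed by `ℤ` (zero for negative indices). -/
def hZ (n : ℤ) : Lam := if 0 ≤ n then hh n.toNat else 0

/-- `e` indexed by `ℤ` (zero for negative indices). -/
def eZ (n : ℤ) : Lam := if 0 ≤ n then ee n.toNat else 0

/-- The differential operator `∏_i (i·∂/∂p_i)^(α i)` (the factors commute,
so the sorted product is the canonical one). -/
def monOp (α : ℕ+ →₀ ℕ) : Module.End ℚ Lam :=
  ((α.support.sort (· ≤ ·)).map fun (i : ℕ+) => (((i : ℕ) : ℚ) • (pderiv i).toLinearMap) ^ (α i)).prod

/-- `f(∂) P`: substitute `p_i ↦ i·∂/∂p_i` in `f` and apply the result to `P`. -/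
def Dop (f : Lam) (P : Lam) : Lam := ∑ α ∈ f.support, f.coeff α • monOp α P

/-- A bound for the weighted degree (`p_i` of weight `i`) of `P`;
`e_j(∂) P = 0 = h_j(∂) P` whenever `j > wbound P`. -/
def wbound (P : Lam) : ℕ := P.support.sup fun α => α.sum fun i k => (i : ℕ) * k

/-- The vertex operator component `S_n = ∑_{j ≥ max(0,n)} (−1)^j h_{j−n} · e_j(∂)`;
on a given polynomial only the (finitely many) terms with `j ≤ wbound P` act nontrivially. -/
def Sop (n : ℤ) (P : Lam) : Lam :=
  ∑ j ∈ Finset.range (wbound P + 1),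
    if n ≤ (j : ℤ) then ((-1 : ℚ)) ^ j • (hZ ((j : ℤ) - n) * Dop (ee j) P) else 0

/-- The dual vertex operator component `S*_n = ∑_{j ≥ max(0,−n)} (−1)^{j+n} e_{j+n} · h_j(∂)`. -/
def SstarOp (n : ℤ) (P : Lam) : Lam :=
  ∑ j ∈ Finset.range (wbound P + 1),
    if -n ≤ (j : ℤ) then ((-1 : ℚ)) ^ ((j : ℤ) + n) • (eZ ((j : ℤ) + n) * Dop (hh j) P) else 0

/-- The Schur function of an arbitrary integer tuple, via the Jacobi–Trudi determinant
`s_ρ = det (h_{ρ_i − i + j})`. -/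
def schur {l : ℕ} (ρ : Fin l → ℤ) : Lam :=
  (Matrix.of fun i j : Fin l => hZ (ρ i - (i.1 : ℤ) + (j.1 : ℤ))).det

/-- The dual Schur function of an integer tuple, `s_{ρ'} = det (e_{ρ_i − i + j})`. -/
def schurE {l : ℕ} (ρ : Fin l → ℤ) : Lam :=
  (Matrix.of fun i j : Fin l => eZ (ρ i - (i.1 : ℤ) + (j.1 : ℤ))).det

open scoped Polynomial PowerSeries

/-! ### Generating series -/

section Series

variable {R : Type*} [CommSemiring R]

/-- The coefficient of a power series at an integer index, zero at negative indices. -/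
def intCoeff (F : R⟦X⟧) (n : ℤ) : R := if 0 ≤ n then PowerSeries.coeff n.toNat F else 0

lemma intCoeff_natCast (F : R⟦X⟧) (n : ℕ) : intCoeff F n = PowerSeries.coeff n F := by
  simp [intCoeff]

lemma intCoeff_of_neg (F : R⟦X⟧) {n : ℤ} (hn : n < 0) : intCoeff F n = 0 :=
  if_neg hn.not_ge

lemma intCoeff_sub_natCast (F : R⟦X⟧) (a b : ℕ) :
    intCoeff F (a - b) = PowerSeries.coeff a (PowerSeries.X ^ b * F) := by
  rw [PowerSeries.coeff_X_pow_mul']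
  split_ifs with h
  · rw [← Nat.cast_sub h, intCoeff_natCast]
  · exact intCoeff_of_neg F (by lia)

lemma derivative_mul (F G : R⟦X⟧) : d⁄dX R (F * G) = F * d⁄dX R G + G * d⁄dX R F :=
  Derivation.leibniz _ F G

lemma derivative_map {S : Type*} [CommSemiring S] (f : R →+* S) (F : R⟦X⟧) :
    d⁄dX S (PowerSeries.map f F) = PowerSeries.map f (d⁄dX R F) := by
  ext k
  simp [PowerSeries.coeff_derivative]

lemma eq_of_derivative_eq_mul [IsAddTorsionFree R] {D F G : R⟦X⟧} (hF : d⁄dX R F = D * F)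
    (hG : d⁄dX R G = D * G) (h0 : PowerSeries.coeff 0 F = PowerSeries.coeff 0 G) :
    F = G := by
  ext n
  induction n using Nat.strong_induction_on with
  | _ n ih =>
    obtain _ | k := n
    · exact h0
    · have hDF : PowerSeries.coeff k (D * F) = PowerSeries.coeff k (D * G) := by
        simp only [PowerSeries.coeff_mul]
        refine Finset.sum_congr rfl fun x hx => ?_
        rw [ih x.2 (Finset.Nat.antidiagonal.snd_lt hx)]
      rw [← hF, ← hG, PowerSeries.coeff_derivative, PowerSeries.coeff_derivative] at hDF
      refine nsmul_right_injective k.succ_ne_zero ?_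
      simpa [nsmul_eq_mul, mul_comm] using hDF

end Series

lemma genFam_zero (c : ℕ → ℚ) : genFam c 0 = 1 := by
  rw [genFam]

lemma succ_smul_genFam_succ (c : ℕ → ℚ) (k : ℕ) :
    ((k : ℚ) + 1) • genFam c (k + 1) =
      ∑ i ∈ Finset.range (k + 1), c (i + 1) • (pp i.succPNat * genFam c (k - i)) := by
  rw [genFam, smul_smul, mul_inv_cancel₀ (by positivity), one_smul]
  rfl

lemma genFam_pow_mul (a : ℚ) (c : ℕ → ℚ) (k : ℕ) :
    genFam (fun n => a ^ n * c n) k = a ^ k • genFam c k := by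
  induction k using Nat.strong_induction_on with
  | _ k ih =>
    obtain _ | k := k
    · simp [genFam_zero]
    · have hk : (k : ℚ) + 1 ≠ 0 := by positivity
      refine (smul_right_inj hk).1 ?_
      rw [smul_comm, succ_smul_genFam_succ, succ_smul_genFam_succ, Finset.smul_sum]
      refine Finset.sum_congr rfl fun i hi => ?_
      have hik : i ≤ k := Finset.mem_range_succ_iff.1 hi
      rw [ih _ (by lia), mul_smul_comm, smul_smul, smul_smul]
      congr 1
      rw [show k + 1 = (i + 1) + (k - i) by lia, pow_add]
      ring

/-- The generating series `∑ g_k t^k` of the family `genFam c`. -/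
def genSeries (c : ℕ → ℚ) : Lam⟦X⟧ := PowerSeries.mk (genFam c)

/-- The series `∑ c (n+1) p_{n+1} tⁿ`, the logarithmic derivative of `genSeries c`. -/
def powerSumSeries (c : ℕ → ℚ) : Lam⟦X⟧ := PowerSeries.mk fun i => c (i + 1) • pp i.succPNat

lemma coeff_zero_genSeries (c : ℕ → ℚ) : PowerSeries.coeff 0 (genSeries c) = 1 := by
  rw [genSeries, PowerSeries.coeff_mk, genFam_zero]

lemma derivative_genSeries (c : ℕ → ℚ) :
    d⁄dX Lam (genSeries c) = powerSumSeries c * genSeries c := by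
  ext1 k
  rw [PowerSeries.coeff_derivative, PowerSeries.coeff_mul,
    Finset.Nat.sum_antidiagonal_eq_sum_range_succ_mk]
  simp only [genSeries, powerSumSeries, PowerSeries.coeff_mk, smul_mul_assoc]
  rw [← succ_smul_genFam_succ, Algebra.smul_def, mul_comm]
  simp

/-- The series `H(t) = ∑ h_k t^k`. -/
def hSeries : Lam⟦X⟧ := genSeries fun _ => 1

/-- The series `E(-t) = ∑ (-1)^k e_k t^k`. It is `E(-t)` rather than `E(t)` that is inverse to
`H(t)`, and working with it removes the signs from the definition of `S*_n`. -/
def altESeries : Lam⟦X⟧ := genSeries fun _ => -1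

lemma intCoeff_hSeries (n : ℤ) : intCoeff hSeries n = hZ n := by
  simp [intCoeff, hSeries, genSeries, hZ, hh]

lemma intCoeff_altESeries (n : ℤ) : intCoeff altESeries n = (-1 : ℚ) ^ n • eZ n := by
  rcases lt_or_ge n 0 with hn | hn
  · rw [intCoeff_of_neg _ hn, eZ, if_neg hn.not_ge, smul_zero]
  · lift n to ℕ using hn
    have hsign : (fun _ => -1 : ℕ → ℚ) = fun n => (-1) ^ n * (-1) ^ (n + 1) := by
      funext n
      rw [← pow_add, (show Odd (n + (n + 1)) from ⟨n, by ring⟩).neg_one_pow]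
    rw [intCoeff_natCast, altESeries, genSeries, PowerSeries.coeff_mk, hsign, genFam_pow_mul]
    simp [eZ, ee]

lemma hSeries_mul_altESeries : hSeries * altESeries = 1 := by
  have hneg : powerSumSeries (fun _ => -1) = -powerSumSeries fun _ => 1 := by
    ext1 k
    simp [powerSumSeries]
  refine eq_of_derivative_eq_mul (D := 0) ?_ ?_ ?_
  · rw [hSeries, altESeries, derivative_mul, derivative_genSeries, derivative_genSeries, hneg]
    ring
  · simp
  · rw [PowerSeries.coeff_mul, Finset.Nat.antidiagonal_zero, Finset.sum_singleton, hSeries,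
      altESeries, coeff_zero_genSeries, coeff_zero_genSeries, mul_one, PowerSeries.coeff_zero_one]

/-! ### The operators `h_j(∂)` as a Taylor shift -/

section TaylorShift

/-- The Taylor shift `P ↦ P(p₁ + z, p₂ + z², …)`, with values in polynomials in `z`. -/
def shiftHom : Lam →ₐ[ℚ] Lam[X] :=
  aeval fun n : ℕ+ => Polynomial.C (pp n) + Polynomial.X ^ (n : ℕ)

lemma shiftHom_pp (n : ℕ+) :
    shiftHom (pp n) = Polynomial.C (pp n) + Polynomial.X ^ (n : ℕ) :=
  aeval_X _ n

lemma map_shiftHom_altESeries :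
    PowerSeries.map (shiftHom : Lam →+* Lam[X]) altESeries =
      PowerSeries.map Polynomial.C altESeries *
        (1 - PowerSeries.C Polynomial.X * PowerSeries.X) := by
  set geom : Lam[X]⟦X⟧ := PowerSeries.mk fun i => Polynomial.X ^ (i + 1) with hgeom
  have geom_mul : geom * (1 - PowerSeries.C Polynomial.X * PowerSeries.X) =
      PowerSeries.C Polynomial.X := by
    ext1 k
    rw [mul_sub, mul_one, mul_left_comm, map_sub, PowerSeries.coeff_C_mul]
    cases k <;> simp [hgeom, PowerSeries.coeff_succ_mul_X, PowerSeries.coeff_C, pow_succ']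
  have map_powerSum : PowerSeries.map (shiftHom : Lam →+* Lam[X]) (powerSumSeries fun _ => -1) =
      PowerSeries.map Polynomial.C (powerSumSeries fun _ => -1) - geom := by
    ext1 k
    simp [powerSumSeries, hgeom, shiftHom_pp, sub_eq_add_neg, add_comm]
  refine eq_of_derivative_eq_mul
    (D := PowerSeries.map Polynomial.C (powerSumSeries fun _ => -1) - geom) ?_ ?_ ?_
  · rw [derivative_map, altESeries, derivative_genSeries, map_mul, map_powerSum]
  · rw [derivative_mul, derivative_map, altESeries, derivative_genSeries, map_mul, map_sub,
      derivative_mul, PowerSeries.derivative_one, PowerSeries.derivative_C,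
      PowerSeries.derivative_X]
    linear_combination PowerSeries.map Polynomial.C (genSeries fun _ => -1) * geom_mul
  · rw [altESeries, mul_sub, mul_one, ← mul_assoc, map_sub, PowerSeries.coeff_zero_mul_X, sub_zero,
      PowerSeries.coeff_map, PowerSeries.coeff_map, coeff_zero_genSeries, map_one, map_one]

lemma shiftHom_intCoeff_altESeries (n : ℤ) :
    shiftHom (intCoeff altESeries n) = Polynomial.C (intCoeff altESeries n) -
      Polynomial.X * Polynomial.C (intCoeff altESeries (n - 1)) := by
  rcases lt_or_ge n 0 with hn | hn
  · simp [intCoeff_of_neg altESeries hn, intCoeff_of_neg altESeries (show n - 1 < 0 by lia)]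
  · lift n to ℕ using hn
    have hcoeff := congrArg (PowerSeries.coeff n) map_shiftHom_altESeries
    rw [mul_sub, mul_one, mul_left_comm, map_sub, PowerSeries.coeff_C_mul] at hcoeff
    rw [← Nat.cast_one, intCoeff_sub_natCast, pow_one, mul_comm PowerSeries.X, intCoeff_natCast]
    cases n <;> simpa [PowerSeries.coeff_succ_mul_X] using hcoeff

lemma pderiv_pderiv_comm {σ R : Type*} [CommRing R] (i j : σ) (P : MvPolynomial σ R) :
    pderiv i (pderiv j P) = pderiv j (pderiv i P) := by
  classical
  have hbracket : ⁅(pderiv i : Derivation R (MvPolynomial σ R) (MvPolynomial σ R)),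
      (pderiv j : Derivation R (MvPolynomial σ R) (MvPolynomial σ R))⁆ = 0 :=
    derivation_ext fun k => by
      by_cases hi : i = k <;> by_cases hj : j = k <;>
        simp [Derivation.commutator_apply, pderiv_X, hi, hj]
  simpa [Derivation.commutator_apply, sub_eq_zero] using DFunLike.congr_fun hbracket P

lemma derivation_aeval_eq_sum {σ R A : Type*} [CommSemiring R] [CommSemiring A] [Algebra R A]
    (D : Derivation R A A) (f : σ → A) {s : Finset σ} {P : MvPolynomial σ R}
    (hP : P ∈ supported R (s : Set σ)) :
    D (aeval f P) = ∑ i ∈ s, aeval f (pderiv i P) * D (f i) := by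
  classical
  induction hP using Algebra.adjoin_induction with
  | mem x hx =>
    obtain ⟨j, hj, rfl⟩ := hx
    simp [pderiv_X, Pi.single_apply, Finset.mem_coe.1 hj]
  | algebraMap r => simp
  | add P Q _ _ ihP ihQ => simp only [map_add, ihP, ihQ, add_mul, Finset.sum_add_distrib]
  | mul P Q _ _ ihP ihQ =>
    simp only [map_mul, Derivation.leibniz, map_add, ihP, ihQ, smul_eq_mul, Finset.mul_sum, add_mul,
      Finset.sum_add_distrib, mul_assoc]

/-- The operator `b_i = i · ∂/∂p_i`. -/
def scaledPderiv (i : ℕ+) : Module.End ℚ Lam := ((i : ℕ) : ℚ) • (pderiv i).toLinearMap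

lemma scaledPderiv_mul_comm (i j : ℕ+) :
    scaledPderiv i * scaledPderiv j = scaledPderiv j * scaledPderiv i := by
  refine LinearMap.ext fun P => ?_
  simp [scaledPderiv, pderiv_pderiv_comm i j, smul_comm ((i : ℕ) : ℚ)]

/-- The algebra of constant-coefficient differential operators generated by the `i · ∂/∂p_i`. It is
commutative, so that the substitution `p_i ↦ i · ∂/∂p_i` is an algebra homomorphism into it. -/
abbrev diffOpAlg : Subalgebra ℚ (Module.End ℚ Lam) := Algebra.adjoin ℚ (Set.range scaledPderiv)

instance : IsMulCommutative diffOpAlg :=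
  Algebra.isMulCommutative_adjoin ℚ (by
    rintro _ ⟨i, rfl⟩ _ ⟨j, rfl⟩
    exact scaledPderiv_mul_comm i j)

open scoped IsMulCommutative

/-- The generator `i · ∂/∂p_i` of `diffOpAlg`. -/
def diffOpGen (i : ℕ+) : diffOpAlg := ⟨scaledPderiv i, Algebra.subset_adjoin ⟨i, rfl⟩⟩

/-- The substitution `f ↦ f(∂)`, that is `p_i ↦ i · ∂/∂p_i`, as an algebra homomorphism. -/
def diffOpHom : Lam →ₐ[ℚ] diffOpAlg := aeval diffOpGen

lemma monOp_eq_prod (α : ℕ+ →₀ ℕ) :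
    monOp α = ((∏ i ∈ α.support, diffOpGen i ^ α i : diffOpAlg) : Module.End ℚ Lam) := by
  have hsort : (∏ i ∈ α.support, diffOpGen i ^ α i : diffOpAlg) =
      ((α.support.sort (· ≤ ·)).map fun i => diffOpGen i ^ α i).prod := by
    rw [← Multiset.prod_coe, ← Multiset.map_coe, Finset.sort_eq]
    rfl
  rw [hsort, monOp, ← Subalgebra.coe_val, map_list_prod, List.map_map]
  rfl

lemma Dop_eq_diffOpHom (f P : Lam) : Dop f P = (diffOpHom f : Module.End ℚ Lam) P := by
  rw [diffOpHom, aeval_def, eval₂_eq, Dop, ← Subalgebra.coe_val, map_sum, LinearMap.sum_apply]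
  refine Finset.sum_congr rfl fun α _ => ?_
  rw [monOp_eq_prod, map_mul]
  rfl

lemma Dop_hh_zero (P : Lam) : Dop (hh 0) P = P := by
  rw [Dop_eq_diffOpHom, hh, genFam_zero, map_one]
  rfl

lemma Dop_pp_mul (n : ℕ+) (f P : Lam) : Dop (pp n * f) P = (n : ℚ) • Dop f (pderiv n P) := by
  have hpp : diffOpHom (pp n) = diffOpGen n := aeval_X _ n
  rw [Dop_eq_diffOpHom, Dop_eq_diffOpHom, mul_comm, map_mul, hpp, ← map_smul]
  rfl

lemma succ_smul_Dop_hh_succ (k : ℕ) (P : Lam) :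
    ((k : ℚ) + 1) • Dop (hh (k + 1)) P =
      ∑ i ∈ Finset.range (k + 1), ((i : ℚ) + 1) • Dop (hh (k - i)) (pderiv i.succPNat P) := by
  have Dop_linear : ∀ f, Dop f P = (LinearMap.applyₗ P ∘ₗ diffOpAlg.val.toLinearMap ∘ₗ
    diffOpHom.toLinearMap) f := fun f => Dop_eq_diffOpHom f P
  rw [hh, Dop_linear, ← map_smul, succ_smul_genFam_succ, map_sum]
  refine Finset.sum_congr rfl fun i _ => ?_
  rw [one_smul, ← Dop_linear, Dop_pp_mul, Nat.succPNat_coe, Nat.cast_succ]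

lemma coeff_zero_shiftHom (P : Lam) : (shiftHom P).coeff 0 = P := by
  have heval : ((Polynomial.aeval (0 : Lam)).restrictScalars ℚ).comp shiftHom = AlgHom.id ℚ Lam :=
    algHom_ext fun n => by
      change Polynomial.aeval (0 : Lam) (shiftHom (pp n)) = pp n
      simp [shiftHom_pp]
  rw [Polynomial.coeff_zero_eq_aeval_zero]
  exact DFunLike.congr_fun heval P

lemma succ_smul_coeff_shiftHom_succ (k : ℕ) (P : Lam) :
    ((k : ℚ) + 1) • (shiftHom P).coeff (k + 1) =
      ∑ i ∈ Finset.range (k + 1),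
        ((i : ℚ) + 1) • (shiftHom (pderiv i.succPNat P)).coeff (k - i) := by
  obtain ⟨N, hN, hP⟩ : ∃ N, k + 1 ≤ N ∧ P ∈ supported ℚ
      ((Finset.range N).map ⟨Nat.succPNat, Nat.succPNat_injective⟩ : Set ℕ+) := by
    refine ⟨P.vars.sup PNat.val + (k + 1), Nat.le_add_left _ _, ?_⟩
    rw [mem_supported]
    intro n hn
    have := Finset.le_sup (f := PNat.val) hn
    refine Finset.mem_coe.2 (Finset.mem_map.2 ⟨n.natPred, ?_, PNat.succPNat_natPred n⟩)
    rw [Finset.mem_range, ← Nat.succ_le_iff, ← Nat.add_one, PNat.natPred_add_one]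
    lia
  have chain : Polynomial.derivative (shiftHom P) = ∑ i ∈ Finset.range N,
      ((i : ℚ) + 1) • (shiftHom (pderiv i.succPNat P) * Polynomial.X ^ i) := by
    refine (derivation_aeval_eq_sum (Polynomial.derivative'.restrictScalars ℚ) _ hP).trans ?_
    rw [Finset.sum_map]
    refine Finset.sum_congr rfl fun i _ => ?_
    change shiftHom (pderiv i.succPNat P) *
      Polynomial.derivative (Polynomial.C (pp i.succPNat) + Polynomial.X ^ (i + 1)) = _
    rw [Polynomial.derivative_add, Polynomial.derivative_C, zero_add,
      Polynomial.derivative_X_pow_succ, Algebra.smul_def, mul_left_comm]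
    simp
  have hcoeff := congrArg (Polynomial.coeff · k) chain
  simp only [Polynomial.coeff_derivative, Polynomial.finsetSum_coeff, Polynomial.coeff_smul,
    Polynomial.coeff_mul_X_pow'] at hcoeff
  calc ((k : ℚ) + 1) • (shiftHom P).coeff (k + 1)
      = (shiftHom P).coeff (k + 1) * (k + 1) := by
        rw [Algebra.smul_def, mul_comm]
        simp
    _ = ∑ i ∈ Finset.range N, ((i : ℚ) + 1) •
          if i ≤ k then (shiftHom (pderiv i.succPNat P)).coeff (k - i) else 0 := hcoeff
    _ = ∑ i ∈ Finset.range (k + 1), ((i : ℚ) + 1) •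
          if i ≤ k then (shiftHom (pderiv i.succPNat P)).coeff (k - i) else 0 :=
        (Finset.sum_subset (Finset.range_subset_range.2 hN) fun i _ hi => by
          rw [if_neg (by simpa using hi), smul_zero]).symm
    _ = _ := Finset.sum_congr rfl fun i hi => by rw [if_pos (Finset.mem_range_succ_iff.1 hi)]

/-- Both sides satisfy the same recursion in `j`: on the left it comes from the recursion for `h_j`,
on the right from the chain rule. -/
lemma Dop_hh (j : ℕ) (P : Lam) : Dop (hh j) P = (shiftHom P).coeff j := by
  induction j using Nat.strong_induction_on generalizing P with
  | _ j ih =>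
    obtain _ | k := j
    · rw [Dop_hh_zero, coeff_zero_shiftHom]
    · have hk : (k : ℚ) + 1 ≠ 0 := by positivity
      refine (smul_right_inj hk).1 ?_
      rw [succ_smul_Dop_hh_succ, succ_smul_coeff_shiftHom_succ]
      exact Finset.sum_congr rfl fun i _ => by rw [ih _ (by lia)]

lemma natDegree_shiftHom_le (P : Lam) : (shiftHom P).natDegree ≤ wbound P := by
  rw [shiftHom, aeval_def, eval₂_eq]
  refine Polynomial.natDegree_sum_le_of_forall_le _ _ fun α hα => ?_
  refine le_trans ?_
    (Finset.le_sup (f := fun α : ℕ+ →₀ ℕ => α.sum fun i k => (i : ℕ) * k) hα)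
  have hvar (n : ℕ+) : (Polynomial.C (pp n) + Polynomial.X ^ (n : ℕ) : Lam[X]).natDegree ≤ n :=
    (Polynomial.natDegree_add_le _ _).trans (by simp)
  rw [IsScalarTower.algebraMap_apply ℚ Lam Lam[X], Polynomial.algebraMap_eq]
  refine (Polynomial.natDegree_C_mul_le _ _).trans ((Polynomial.natDegree_prod_le _ _).trans ?_)
  exact Finset.sum_le_sum fun i _ =>
    (Polynomial.natDegree_pow_le_of_le (α i) (hvar i)).trans_eq (mul_comm _ _)

lemma SstarOp_eq_sum (n : ℤ) (P : Lam) :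
    SstarOp n P = (shiftHom P).sum fun j a => intCoeff altESeries (n + j) * a := by
  rw [Polynomial.sum_over_range' _ (fun _ => mul_zero _) _
    (Nat.lt_succ_of_le (natDegree_shiftHom_le P))]
  refine Finset.sum_congr rfl fun j _ => ?_
  split_ifs with hj
  · rw [Dop_hh, add_comm n, intCoeff_altESeries, smul_mul_assoc]
  · rw [intCoeff_of_neg _ (by lia), zero_mul]

end TaylorShift

/-! ### Vertex operators and determinants -/

section JacobiTrudi

variable {R : Type*} [CommRing R]

/-- The Jacobi–Trudi determinant `det (F_{ρ_i - i + j})` of a power series `F`. -/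
def jacobiTrudi (F : R⟦X⟧) {l : ℕ} (ρ : Fin l → ℤ) : R :=
  (Matrix.of fun i j : Fin l => intCoeff F (ρ i - i + j)).det

/-- Put the row `(1, x, x², …)` on top of `A`: column operations turn it into `(1, 0, …, 0)` and
produce the matrix on the left, while the Laplace expansion along it gives the right-hand side. -/
lemma det_succ_sub_mul_castSucc {l : ℕ} (A : Matrix (Fin l) (Fin (l + 1)) R) (x : R) :
    (Matrix.of fun i j : Fin l => A i j.succ - x * A i j.castSucc).det =
      ∑ c : Fin (l + 1), (-1) ^ (c : ℕ) * x ^ (c : ℕ) * (A.submatrix id c.succAbove).det := by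
  let U : Matrix (Fin (l + 1)) (Fin (l + 1)) R :=
    Matrix.of (Fin.cons (fun c => x ^ (c : ℕ)) A)
  let V : Matrix (Fin (l + 1)) (Fin (l + 1)) R :=
    Matrix.of fun i => Fin.cons (U i 0) fun j => U i j.succ - x * U i j.castSucc
  have hUV : U.det = V.det :=
    Matrix.det_eq_of_forall_col_eq_smul_add_pred (fun _ => x) (fun _ => rfl) fun i j => by
      simp [V]
  have hV : V.det = (Matrix.of fun i j : Fin l => A i j.succ - x * A i j.castSucc).det := by
    have htop (j : Fin l) : V 0 j.succ = 0 := sub_eq_zero.2 (pow_succ' x j)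
    have hcorner : V 0 0 = 1 := pow_zero x
    rw [Matrix.det_succ_row_zero, Fin.sum_univ_succ, Finset.sum_eq_zero fun j _ => by simp [htop],
      hcorner, Fin.val_zero, pow_zero, one_mul, one_mul, add_zero]
    rfl
  rw [← hV, ← hUV, Matrix.det_succ_row_zero]
  rfl

end JacobiTrudi

lemma schur_eq_jacobiTrudi {l : ℕ} (ρ : Fin l → ℤ) : schur ρ = jacobiTrudi hSeries ρ := by
  simp only [schur, jacobiTrudi, intCoeff_hSeries]

lemma jacobiTrudi_altESeries {l : ℕ} (ρ : Fin l → ℤ) :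
    jacobiTrudi altESeries ρ = (∏ i, (-1 : ℚ) ^ ρ i) • schurE ρ := by
  have hsign : (Matrix.of fun i j : Fin l => intCoeff altESeries (ρ i - i + j)) =
      Matrix.of fun i j => algebraMap ℚ Lam ((-1) ^ ρ i * (-1) ^ (i : ℕ)) *
        (Matrix.of fun i (j : Fin l) => algebraMap ℚ Lam ((-1) ^ (j : ℕ)) *
          (Matrix.of fun i j : Fin l => eZ (ρ i - i + j)) i j) i j := by
    ext1 i j
    simp only [Matrix.of_apply]
    rw [intCoeff_altESeries, Algebra.smul_def, ← mul_assoc, ← map_mul,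
      zpow_add₀ (by simp), zpow_sub₀ (by simp), zpow_natCast, zpow_natCast, div_eq_mul_inv,
      ← inv_pow, inv_neg_one]
  rw [jacobiTrudi, hsign, Matrix.det_mul_column, Matrix.det_mul_row, ← mul_assoc, ← map_prod,
    ← map_prod, ← map_mul, Finset.prod_mul_distrib, mul_assoc, ← Finset.prod_mul_distrib]
  simp [← mul_pow, Algebra.smul_def, schurE]

lemma shiftHom_jacobiTrudi_altESeries {l : ℕ} (ρ : Fin l → ℤ) :
    shiftHom (jacobiTrudi altESeries ρ) = ∑ c : Fin (l + 1),
      Polynomial.C ((-1) ^ (c : ℕ) * (Matrix.of fun i j : Fin l =>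
        intCoeff altESeries (ρ i - i + c.succAbove j - 1)).det) * Polynomial.X ^ (c : ℕ) := by
  let A : Matrix (Fin l) (Fin (l + 1)) Lam :=
    Matrix.of fun i c => intCoeff altESeries (ρ i - i + c - 1)
  have hshift : shiftHom.mapMatrix (Matrix.of fun i j : Fin l =>
        intCoeff altESeries (ρ i - i + j)) =
      Matrix.of fun i j : Fin l => A.map Polynomial.C i j.succ -
        Polynomial.X * A.map Polynomial.C i j.castSucc := by
    ext1 i j
    simp [A, shiftHom_intCoeff_altESeries, ← add_assoc]
  rw [jacobiTrudi, AlgHom.map_det, hshift, det_succ_sub_mul_castSucc]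
  refine Finset.sum_congr rfl fun c _ => ?_
  rw [Matrix.submatrix_map, ← RingHom.mapMatrix_apply, ← RingHom.map_det, mul_right_comm]
  simp only [map_mul, map_pow, map_neg, map_one]
  rfl

/-- Laplace expansion along the first row. -/
lemma SstarOp_jacobiTrudi_altESeries {l : ℕ} (n : ℤ) (ρ : Fin l → ℤ) :
    SstarOp n (jacobiTrudi altESeries ρ) =
      jacobiTrudi altESeries (Fin.cons n ρ : Fin (l + 1) → ℤ) := by
  rw [SstarOp_eq_sum, shiftHom_jacobiTrudi_altESeries,
    ← Polynomial.sum_fin _ (fun _ => mul_zero _) (Polynomial.degree_sum_fin_lt _), jacobiTrudi,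
    Matrix.det_succ_row_zero]
  refine Finset.sum_congr rfl fun c _ => ?_
  have hminor : (Matrix.of fun i j : Fin l =>
        intCoeff altESeries (ρ i - i + c.succAbove j - 1)) =
      (Matrix.of fun i j : Fin (l + 1) => intCoeff altESeries
        ((Fin.cons n ρ : Fin (l + 1) → ℤ) i - i + j)).submatrix Fin.succ c.succAbove := by
    ext1 i j
    simp only [Matrix.of_apply, Matrix.submatrix_apply, Fin.cons_succ, Fin.val_succ, Nat.cast_succ]
    congr 1
    ring
  simp only [Polynomial.finsetSum_coeff, Polynomial.coeff_C_mul, Polynomial.coeff_X_pow,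
    Fin.val_inj, mul_ite, mul_one, mul_zero, Finset.sum_ite_eq, Finset.mem_univ, if_true]
  rw [← hminor, ← mul_assoc, mul_comm (intCoeff _ _)]
  simp

lemma foldr_SstarOp_one {l : ℕ} (ρ : Fin l → ℤ) :
    (List.ofFn ρ).foldr SstarOp 1 = jacobiTrudi altESeries ρ := by
  induction l with
  | zero => simp [jacobiTrudi]
  | succ l ih =>
    rw [List.ofFn_succ, List.foldr_cons, ih, SstarOp_jacobiTrudi_altESeries]
    exact congrArg _ (Fin.cons_self_tail ρ)

/-! ### Complementary minors -/

section ComplementaryMinors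

variable {p q R : Type*} [Fintype p] [Fintype q] [DecidableEq p] [DecidableEq q] [CommRing R]

lemma det_mul_det_toBlocks₂₂ {A B : Matrix (p ⊕ q) (p ⊕ q) R} (hAB : A * B = 1) :
    A.det * B.toBlocks₂₂.det = A.toBlocks₁₁.det := by
  have hmul : A * Matrix.fromBlocks 1 B.toBlocks₁₂ 0 B.toBlocks₂₂ =
      Matrix.fromBlocks A.toBlocks₁₁ 0 A.toBlocks₂₁ 1 := by
    rw [← Matrix.fromBlocks_toBlocks A, ← Matrix.fromBlocks_toBlocks B,
      Matrix.fromBlocks_multiply, ← Matrix.fromBlocks_one, Matrix.fromBlocks_inj] at hAB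
    conv_lhs => rw [← Matrix.fromBlocks_toBlocks A]
    rw [Matrix.fromBlocks_multiply, Matrix.fromBlocks_inj]
    exact ⟨by simp, hAB.2.1, by simp, hAB.2.2.2⟩
  simpa using congrArg Matrix.det hmul

/-- Jacobi's identity for complementary minors of mutually inverse matrices, the rows of `A` being
partitioned by `e` and its columns by `f`. -/
lemma sign_mul_det_mul_det_submatrix {n : Type*} [Fintype n] [DecidableEq n] {A B : Matrix n n R}
    (hAB : A * B = 1) (e f : p ⊕ q ≃ n) :
    (Equiv.Perm.sign (f.symm.trans e) : R) * A.det *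
        (B.submatrix (f ∘ Sum.inr) (e ∘ Sum.inr)).det =
      (A.submatrix (e ∘ Sum.inl) (f ∘ Sum.inl)).det := by
  have hmul : A.submatrix e f * B.submatrix f e = 1 := by
    rw [Matrix.submatrix_mul_equiv, hAB, Matrix.submatrix_one_equiv]
  have hdet : (A.submatrix e f).det = Equiv.Perm.sign (f.symm.trans e) * A.det := by
    rw [← Matrix.det_permute, ← Matrix.det_submatrix_equiv_self f]
    simp [Matrix.submatrix_submatrix, Function.comp_def]
  rw [← hdet]
  exact det_mul_det_toBlocks₂₂ hmul

end ComplementaryMinors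

lemma sign_shuffle {m l : ℕ} (e : Fin m ⊕ Fin l ≃ Fin (m + l)) (hinl : StrictMono (e ∘ Sum.inl))
    (hinr : StrictMono (e ∘ Sum.inr)) :
    Equiv.Perm.sign (finSumFinEquiv.symm.trans e) =
      ∏ i, ∏ j, if e (Sum.inr i) < e (Sum.inl j) then -1 else 1 := by
  have prod_Ioi (a : Fin (m + l)) (g : Fin (m + l) → ℤˣ) :
      ∏ b ∈ Finset.Ioi a, g b = ∏ b, if a < b then g b else 1 := by
    rw [← Finset.prod_filter, Finset.filter_lt_eq_Ioi]
  have hcross (j : Fin m) (i : Fin l) : Fin.castAdd l j < Fin.natAdd m i :=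
    Fin.lt_def.2 (j.isLt.trans_le (Nat.le_add_right m i))
  have hll (j k : Fin m) : (if Fin.castAdd l j < Fin.castAdd l k then
      if e (Sum.inl j) < e (Sum.inl k) then (1 : ℤˣ) else -1 else 1) = 1 :=
    ite_eq_right_iff.2 fun hjk => if_pos (hinl ((Fin.strictMono_castAdd l).lt_iff_lt.1 hjk))
  have hrr (i k : Fin l) : (if Fin.natAdd m i < Fin.natAdd m k then
      if e (Sum.inr i) < e (Sum.inr k) then (1 : ℤˣ) else -1 else 1) = 1 :=
    ite_eq_right_iff.2 fun hik => if_pos (hinr ((Fin.strictMono_natAdd m).lt_iff_lt.1 hik))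
  have hlr (j : Fin m) (i : Fin l) : (if Fin.castAdd l j < Fin.natAdd m i then
      if e (Sum.inl j) < e (Sum.inr i) then (1 : ℤˣ) else -1 else 1) =
        if e (Sum.inr i) < e (Sum.inl j) then -1 else 1 := by
    have hne : e (Sum.inr i) ≠ e (Sum.inl j) := e.injective.ne Sum.inr_ne_inl
    rw [if_pos (hcross j i), ← ite_not]
    simp only [not_lt, hne.le_iff_lt]
  have hrl (i : Fin l) (j : Fin m) : (if Fin.natAdd m i < Fin.castAdd l j then
      if e (Sum.inr i) < e (Sum.inl j) then (1 : ℤˣ) else -1 else 1) = 1 :=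
    if_neg (hcross j i).not_gt
  rw [Equiv.Perm.sign_eq_prod_prod_Ioi, Finset.prod_comm]
  simp only [prod_Ioi, Fin.prod_univ_add, Equiv.trans_apply, finSumFinEquiv_symm_apply_castAdd,
    finSumFinEquiv_symm_apply_natAdd, hll, hrr, hlr, hrl, Finset.prod_const_one, one_mul, mul_one]

/-! ### The conjugate partition -/

section ConjugatePartition

variable {l : ℕ} {lam : Fin l → ℕ}

/-- The part `λ'_{j+1} = #{i : λ_i ≥ j + 1}` of the conjugate of the partition `lam`. -/
def conjPart (lam : Fin l → ℕ) (j : ℕ) : ℕ :=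
  (Finset.univ.filter fun i : Fin l => j + 1 ≤ lam i).card

lemma conjPart_le (lam : Fin l → ℕ) (j : ℕ) : conjPart lam j ≤ l :=
  (Finset.card_le_univ _).trans_eq (Fintype.card_fin l)

lemma antitone_conjPart (lam : Fin l → ℕ) : Antitone (conjPart lam) := fun _ _ hjk =>
  Finset.card_le_card <| Finset.monotone_filter_right _ fun _ _ => (Nat.succ_le_succ hjk).trans

lemma lt_conjPart_iff (hlam : Antitone lam) {i : Fin l} {j : ℕ} :
    (i : ℕ) < conjPart lam j ↔ j < lam i := by
  refine ⟨fun h => ?_, fun h => ?_⟩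
  · by_contra! hj
    have hsub : (Finset.univ.filter fun k : Fin l => j + 1 ≤ lam k) ⊆ Finset.Iio i := by
      intro k hk
      rw [Finset.mem_Iio]
      by_contra! hik
      exact absurd ((Finset.mem_filter.1 hk).2.trans (hlam hik)) (by lia)
    exact h.not_ge ((Finset.card_le_card hsub).trans_eq (Fin.card_Iio i))
  · have hsub : Finset.Iic i ⊆ Finset.univ.filter fun k : Fin l => j + 1 ≤ lam k := fun k hk =>
      Finset.mem_filter.2 ⟨Finset.mem_univ k, h.trans_le (hlam (Finset.mem_Iic.1 hk))⟩
    exact (Fin.card_Iic i).ge.trans (Finset.card_le_card hsub)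

variable {m : ℕ}

/-- The Maya diagram of a partition `λ ⊆ (m^l)`: the positions, among the `m + l` steps of its
boundary path, of the horizontal steps (`inl`) and of the vertical steps (`inr`), both increasing.
The subtraction is exact when all parts are at most `m`. -/
def maya (m : ℕ) (lam : Fin l → ℕ) : Fin m ⊕ Fin l → Fin (m + l) :=
  Sum.elim
    (fun j => ⟨conjPart lam j.rev + j, by have := conjPart_le lam j.rev; lia⟩)
    (fun i => ⟨m + i - lam i, by lia⟩)

lemma strictMono_maya_inl : StrictMono (maya m lam ∘ Sum.inl) := fun _ _ hjk =>
  add_lt_add_of_le_of_lt (antitone_conjPart lam (Fin.rev_le_rev.2 hjk.le)) hjk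

lemma strictMono_maya_inr (hlam : Antitone lam) (hm : ∀ i, lam i ≤ m) :
    StrictMono (maya m lam ∘ Sum.inr) := fun i k hik => by
  have := hlam hik.le
  have := hm i
  simp only [maya, Function.comp_apply, Sum.elim_inr, Fin.mk_lt_mk]
  lia

lemma maya_inr_lt_inl (hlam : Antitone lam) (hm : ∀ i, lam i ≤ m) {i : Fin l} {j : Fin m}
    (h : (j.rev : ℕ) < lam i) : maya m lam (Sum.inr i) < maya m lam (Sum.inl j) := by
  have := hm i
  have := (lt_conjPart_iff hlam).2 h
  have := Fin.val_rev j
  simp only [maya, Sum.elim_inr, Sum.elim_inl, Fin.mk_lt_mk]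
  lia

lemma maya_inl_lt_inr (hlam : Antitone lam) {i : Fin l} {j : Fin m}
    (h : lam i ≤ j.rev) : maya m lam (Sum.inl j) < maya m lam (Sum.inr i) := by
  have := (lt_conjPart_iff hlam).not.2 h.not_gt
  have := Fin.val_rev j
  simp only [maya, Sum.elim_inr, Sum.elim_inl, Fin.mk_lt_mk]
  lia

lemma maya_inr_lt_inl_iff (hlam : Antitone lam) (hm : ∀ i, lam i ≤ m) {i : Fin l} {j : Fin m} :
    maya m lam (Sum.inr i) < maya m lam (Sum.inl j) ↔ (j.rev : ℕ) < lam i :=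
  ⟨fun h => not_le.1 fun hle => h.not_gt (maya_inl_lt_inr hlam hle), maya_inr_lt_inl hlam hm⟩

lemma maya_injective (hlam : Antitone lam) (hm : ∀ i, lam i ≤ m) :
    Function.Injective (maya m lam) := by
  refine Function.Injective.sumElim strictMono_maya_inl.injective
    (strictMono_maya_inr hlam hm).injective fun j i => ?_
  rcases lt_or_ge (j.rev : ℕ) (lam i) with h | h
  · exact (maya_inr_lt_inl hlam hm h).ne'
  · exact (maya_inl_lt_inr hlam h).ne

/-- The Maya diagram as a bijection. -/
def mayaEquiv (hlam : Antitone lam) (hm : ∀ i, lam i ≤ m) : Fin m ⊕ Fin l ≃ Fin (m + l) :=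
  Equiv.ofBijective (maya m lam) <|
    (Fintype.bijective_iff_injective_and_card _).2 ⟨maya_injective hlam hm, by simp⟩

/-- The inversions of the shuffle are the boxes of the Young diagram. -/
lemma sign_mayaEquiv (hlam : Antitone lam) (hm : ∀ i, lam i ≤ m) :
    Equiv.Perm.sign (finSumFinEquiv.symm.trans (mayaEquiv hlam hm)) = (-1) ^ ∑ i, lam i := by
  rw [sign_shuffle _ strictMono_maya_inl (strictMono_maya_inr hlam hm),
    ← Finset.prod_pow_eq_pow_sum]
  refine Finset.prod_congr rfl fun i _ => ?_
  calc ∏ j : Fin m, (if maya m lam (Sum.inr i) < maya m lam (Sum.inl j) then (-1 : ℤˣ) else 1)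
      = ∏ j : Fin m, if (j.rev : ℕ) < lam i then (-1 : ℤˣ) else 1 := by
        simp only [maya_inr_lt_inl_iff hlam hm]
    _ = ∏ j : Fin m, if (j : ℕ) < lam i then (-1 : ℤˣ) else 1 :=
        Equiv.prod_comp Fin.revPerm fun j : Fin m => if (j : ℕ) < lam i then (-1 : ℤˣ) else 1
    _ = (-1) ^ lam i := by
        rw [← Finset.prod_filter, Finset.prod_const, Fin.card_filter_val_lt, min_eq_right (hm i)]

end ConjugatePartition

/-! ### The dual Jacobi–Trudi identity -/

section DualJacobiTrudi

variable {R : Type*} [CommRing R]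

/-- The lower triangular Toeplitz matrix `(F_{a-b})` of a power series `F`. -/
def toeplitz (F : R⟦X⟧) (N : ℕ) : Matrix (Fin N) (Fin N) R :=
  Matrix.of fun a b => intCoeff F ((a : ℕ) - (b : ℕ))

lemma toeplitz_one (N : ℕ) : toeplitz (1 : R⟦X⟧) N = 1 := by
  ext1 a b
  simp only [toeplitz, Matrix.of_apply]
  rw [intCoeff_sub_natCast, mul_one, PowerSeries.coeff_X_pow, Matrix.one_apply]
  simp only [Fin.val_inj]

lemma toeplitz_mul (F G : R⟦X⟧) (N : ℕ) : toeplitz F N * toeplitz G N = toeplitz (F * G) N := by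
  ext1 a b
  have habove (c : ℕ) (hc : (a : ℕ) < c) : intCoeff F ((a : ℕ) - c) = 0 :=
    intCoeff_of_neg F (by lia)
  calc (toeplitz F N * toeplitz G N) a b
      = ∑ c ∈ Finset.range N, intCoeff F ((a : ℕ) - c) * intCoeff G (c - (b : ℕ)) :=
        Fin.sum_univ_eq_sum_range
          (fun c => intCoeff F ((a : ℕ) - c) * intCoeff G (c - (b : ℕ))) N
    _ = ∑ c ∈ Finset.range (a + 1), intCoeff F ((a : ℕ) - c) * intCoeff G (c - (b : ℕ)) :=
        (Finset.sum_subset (Finset.range_subset_range.2 a.isLt) fun c _ hc => by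
          rw [habove c (by simpa using hc), zero_mul]).symm
    _ = ∑ c ∈ Finset.range (a + 1),
          PowerSeries.coeff c (PowerSeries.X ^ (b : ℕ) * G) * PowerSeries.coeff (a - c) F :=
        Finset.sum_congr rfl fun c hc => by
          rw [intCoeff_sub_natCast G, ← Nat.cast_sub (Finset.mem_range_succ_iff.1 hc),
            intCoeff_natCast, mul_comm]
    _ = toeplitz (F * G) N a b := by
        rw [toeplitz, Matrix.of_apply, intCoeff_sub_natCast, mul_comm F, ← mul_assoc,
          PowerSeries.coeff_mul, Finset.Nat.sum_antidiagonal_eq_sum_range_succ_mk]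

lemma det_toeplitz {F : R⟦X⟧} (hF : PowerSeries.coeff 0 F = 1) (N : ℕ) :
    (toeplitz F N).det = 1 := by
  have hdiag (a : Fin N) : toeplitz F N a a = 1 := by
    rw [toeplitz, Matrix.of_apply, sub_self, ← Nat.cast_zero, intCoeff_natCast, hF]
  have hlower : (toeplitz F N).IsLowerTriangular := fun a b (hab : a < b) =>
    intCoeff_of_neg F (sub_neg.2 (Nat.cast_lt.2 hab))
  rw [Matrix.det_of_isLowerTriangular _ hlower]
  exact Finset.prod_eq_one fun a _ => hdiag a

/-- The two determinants are complementary minors of the mutually inverse Toeplitz matrices of `F`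
and `G`, selected by the Maya diagram. -/
lemma jacobiTrudi_eq_jacobiTrudi_conjPart {F G : R⟦X⟧} (hFG : F * G = 1)
    (hF : PowerSeries.coeff 0 F = 1) {l m : ℕ} {lam : Fin l → ℕ} (hlam : Antitone lam)
    (hm : ∀ i, lam i ≤ m) :
    jacobiTrudi G (fun i => (lam i : ℤ)) =
      (-1) ^ (∑ i, lam i) * jacobiTrudi F fun j : Fin m => (conjPart lam j : ℤ) := by
  have hinv : toeplitz F (m + l) * toeplitz G (m + l) = 1 := by
    rw [toeplitz_mul, hFG, toeplitz_one]
  have hminors := sign_mul_det_mul_det_submatrix hinv (mayaEquiv hlam hm) finSumFinEquiv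
  have hminorF : ((toeplitz F (m + l)).submatrix (mayaEquiv hlam hm ∘ Sum.inl)
      (finSumFinEquiv ∘ Sum.inl)).det = jacobiTrudi F fun j : Fin m => (conjPart lam j : ℤ) := by
    rw [jacobiTrudi, ← Matrix.det_submatrix_equiv_self Fin.revPerm]
    congr 1
    ext1 i j
    simp only [toeplitz, Matrix.submatrix_apply, Matrix.of_apply, Function.comp_apply, mayaEquiv,
      Equiv.ofBijective_apply, maya, Sum.elim_inl, finSumFinEquiv_apply_left, Fin.val_castAdd,
      Fin.revPerm_apply, Fin.rev_rev]
    have := Fin.val_rev i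
    have := Fin.val_rev j
    congr 1
    lia
  have hminorG : ((toeplitz G (m + l)).submatrix (finSumFinEquiv ∘ Sum.inr)
      (mayaEquiv hlam hm ∘ Sum.inr)).det = jacobiTrudi G fun i => (lam i : ℤ) := by
    rw [jacobiTrudi, ← Matrix.det_transpose]
    congr 1
    ext1 i j
    have := hm i
    simp only [toeplitz, Matrix.transpose_apply, Matrix.submatrix_apply, Matrix.of_apply,
      Function.comp_apply, mayaEquiv, Equiv.ofBijective_apply, maya, Sum.elim_inr,
      finSumFinEquiv_apply_right, Fin.val_natAdd]
    congr 1
    lia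
  rw [hminorF, hminorG, det_toeplitz hF, sign_mayaEquiv, mul_one] at hminors
  rw [← hminors, ← mul_assoc]
  simp [← mul_pow]

end DualJacobiTrudi

/-- for every partition `λ = (λ₁ ≥ … ≥ λ_l ≥ 0)`, the dual vertex operator
components applied to the vacuum give, up to sign, the Schur function of the conjugate
partition `λ'` (where `λ'_i = #{j : λ_j ≥ i}`, `1 ≤ i ≤ λ₁`):
`S*_{λ₁} ⋯ S*_{λ_l} (1) = (−1)^{|λ|} s_{λ'} = (−1)^{|λ|} det (h_{λ'_i − i + j})_{1≤i,j≤λ₁}`;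
equivalently `S*_{λ₁} ⋯ S*_{λ_l} (1) = (−1)^{|λ|} det (e_{λ_i − i + j})_{1≤i,j≤l}`. -/
theorem dual_vertex_vacuum_eq_conjugate_schur (l : ℕ) (lam : Fin l → ℕ)
    (hlam : Antitone lam) :
    ((List.ofFn fun i => (lam i : ℤ)).foldr SstarOp 1
        = ((-1 : ℚ)) ^ (∑ i, lam i) •
          schur (fun i : Fin (if h : 0 < l then lam ⟨0, h⟩ else 0) =>
            ((Finset.univ.filter fun j : Fin l => i.1 + 1 ≤ lam j).card : ℤ))) ∧
    ((List.ofFn fun i => (lam i : ℤ)).foldr SstarOp 1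
        = ((-1 : ℚ)) ^ (∑ i, lam i) • schurE (fun i => (lam i : ℤ))) := by
  have vacuum : (List.ofFn fun i => (lam i : ℤ)).foldr SstarOp 1 =
      jacobiTrudi altESeries fun i => (lam i : ℤ) := foldr_SstarOp_one _
  have hsign : ∏ i, (-1 : ℚ) ^ (lam i : ℤ) = (-1) ^ ∑ i, lam i := by
    simp only [zpow_natCast, Finset.prod_pow_eq_pow_sum]
  constructor
  · have hle (i : Fin l) : lam i ≤ if h : 0 < l then lam ⟨0, h⟩ else 0 := by
      rw [dif_pos i.pos]
      exact hlam (Nat.zero_le i)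
    rw [vacuum, jacobiTrudi_eq_jacobiTrudi_conjPart hSeries_mul_altESeries
      (coeff_zero_genSeries _) hlam hle, schur_eq_jacobiTrudi, Algebra.smul_def, map_pow, map_neg,
      map_one]
    rfl
  · rw [vacuum, jacobiTrudi_altESeries, hsign]
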